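/- arXiv:math/0303108 — 6 statements merged into one kernel-verified Lean document; each statement's English description precedes it below -/
import Mathlib

section
/- For every M > 0 there exists a constant C > 0 with the following property: for all real numbers l₁, l₂, l₃ with 0 < lᵢ ≤ M for i = 1, 2, 3, and every real number d ≥ 0 satisfying cosh d = (cosh(l₃/2) + cosh(l₁/2)·cosh(l₂/2)) / (sinh(l₁/2)·sinh(l₂/2)), one has |d − log(1/l₁) − log(1/l₂)| ≤ C. -/
open Real

lemma aux_sinh_le (x : ℝ) : Real.sinh x ≤ x * Real.exp x := by
  have h := Real.add_one_le_exp (-(2 * x))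
  have e : Real.exp (-x) = Real.exp x * Real.exp (-(2 * x)) := by
    rw [← Real.exp_add]; congr 1; ring
  rw [Real.sinh_eq, e]
  nlinarith [Real.exp_pos x]

lemma aux_cosh_le (x : ℝ) (hx : 0 ≤ x) : Real.cosh x ≤ Real.exp x := by
  have h : Real.exp (-x) ≤ Real.exp x := Real.exp_le_exp.2 (by linarith)
  rw [Real.cosh_eq]; linarith

/-- In a hyperbolic pair of pants with boundary lengths `l₁, l₂, l₃` bounded
above by `M`, the common perpendicular between the boundary components of
lengths `l₁` and `l₂` has length `d = log(1/l₁) + log(1/l₂) + O(1)`, uniformly. -/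
theorem perpendicular_length_estimate (M : ℝ) (hM : 0 < M) :
    ∃ C : ℝ, 0 < C ∧ ∀ l₁ l₂ l₃ d : ℝ,
      0 < l₁ → l₁ ≤ M → 0 < l₂ → l₂ ≤ M → 0 < l₃ → l₃ ≤ M → 0 ≤ d →
      Real.cosh d = (Real.cosh (l₃ / 2) + Real.cosh (l₁ / 2) * Real.cosh (l₂ / 2)) /
        (Real.sinh (l₁ / 2) * Real.sinh (l₂ / 2)) →
      |d - Real.log (1 / l₁) - Real.log (1 / l₂)| ≤ C := by
  refine ⟨M + 15, by linarith, ?_⟩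
  intro l₁ l₂ l₃ d h1 h1M h2 h2M h3 h3M hd h
  have s1 : l₁ / 2 ≤ Real.sinh (l₁ / 2) := Real.self_le_sinh_iff.2 (by linarith)
  have s2 : l₂ / 2 ≤ Real.sinh (l₂ / 2) := Real.self_le_sinh_iff.2 (by linarith)
  have s1p : 0 < Real.sinh (l₁ / 2) := by linarith
  have s2p : 0 < Real.sinh (l₂ / 2) := by linarith
  rw [eq_div_iff (by positivity)] at h
  have hE : Real.exp (d + Real.log l₁ + Real.log l₂) = Real.exp d * (l₁ * l₂) := by
    rw [Real.exp_add, Real.exp_add, Real.exp_log h1, Real.exp_log h2]; ring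
  have ee : Real.exp (l₁ / 2) * Real.exp (l₂ / 2) ≤ Real.exp M := by
    rw [← Real.exp_add]; exact Real.exp_le_exp.2 (by linarith)
  have up : Real.exp d * (l₁ * l₂) ≤ 16 * Real.exp M := by
    have a : Real.exp d / 2 ≤ Real.cosh d := by
      rw [Real.cosh_eq]; linarith [Real.exp_pos (-d)]
    have b : Real.exp d / 2 * (l₁ / 2 * (l₂ / 2)) ≤
        Real.cosh d * (Real.sinh (l₁ / 2) * Real.sinh (l₂ / 2)) := by gcongr
    have c : Real.cosh (l₃ / 2) ≤ Real.exp M :=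
      (aux_cosh_le _ (by linarith)).trans (Real.exp_le_exp.2 (by linarith))
    have c2 : Real.cosh (l₁ / 2) * Real.cosh (l₂ / 2) ≤
        Real.exp (l₁ / 2) * Real.exp (l₂ / 2) :=
      mul_le_mul (aux_cosh_le _ (by linarith)) (aux_cosh_le _ (by linarith))
        (Real.cosh_pos _).le (Real.exp_pos _).le
    linarith
  have lo : 1 ≤ Real.exp d * (l₁ * l₂) * Real.exp M := by
    have b : Real.cosh d * (Real.sinh (l₁ / 2) * Real.sinh (l₂ / 2)) ≤
        Real.exp d * ((l₁ / 2 * Real.exp (l₁ / 2)) * (l₂ / 2 * Real.exp (l₂ / 2))) := by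
      gcongr
      · exact aux_cosh_le d hd
      · exact aux_sinh_le _
      · exact aux_sinh_le _
    have c := Real.one_le_cosh (l₃ / 2)
    have c2 := mul_pos (Real.cosh_pos (l₁ / 2)) (Real.cosh_pos (l₂ / 2))
    have p : 0 < Real.exp d * (l₁ * l₂) := by positivity
    have q := mul_le_mul_of_nonneg_left ee p.le
    have r := mul_pos p (Real.exp_pos M)
    linarith
  rw [← hE] at up lo
  rw [← Real.exp_add, Real.one_le_exp_iff] at lo
  have k : (16 : ℝ) ≤ Real.exp 15 := by linarith [Real.add_one_le_exp (15 : ℝ)]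
  have up2 : Real.exp (d + Real.log l₁ + Real.log l₂) ≤ Real.exp (15 + M) := by
    rw [Real.exp_add 15 M]
    exact up.trans (by gcongr)
  rw [Real.exp_le_exp] at up2
  rw [one_div, one_div, Real.log_inv, Real.log_inv, abs_le]
  constructor <;> linarith
end

section
/- For every M > 0 there exists a constant C > 0 with the following property: for all real numbers l₁, l₂, l₃ with 0 < lᵢ ≤ M for i = 1, 2, 3, every real number d ≥ 0 satisfying cosh d = (cosh(l₃/2) + cosh(l₁/2)·cosh(l₂/2)) / (sinh(l₁/2)·sinh(l₂/2)), and every real number d' ≥ 0 satisfying cosh(d'/2) = sinh(d)·sinh(l₂/2), one has |d' − 2·log(1/l₁)| ≤ C. -/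
open Real

/-- In a hyperbolic pair of pants with boundary lengths `l₁, l₂, l₃` bounded
above by `M`, the perpendicular arc from the boundary component of length `l₁`
to itself has length `d' = 2·log(1/l₁) + O(1)`, uniformly. -/
theorem self_perpendicular_length_estimate (M : ℝ) (hM : 0 < M) :
    ∃ C : ℝ, 0 < C ∧ ∀ l₁ l₂ l₃ d d' : ℝ,
      0 < l₁ → l₁ ≤ M → 0 < l₂ → l₂ ≤ M → 0 < l₃ → l₃ ≤ M → 0 ≤ d → 0 ≤ d' →
      Real.cosh d = (Real.cosh (l₃ / 2) + Real.cosh (l₁ / 2) * Real.cosh (l₂ / 2)) /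
        (Real.sinh (l₁ / 2) * Real.sinh (l₂ / 2)) →
      Real.cosh (d' / 2) = Real.sinh d * Real.sinh (l₂ / 2) →
      |d' - 2 * Real.log (1 / l₁)| ≤ C := by
  have hK1 : 1 ≤ Real.exp (M / 2) := Real.one_le_exp (by linarith)
  have hcosh : ∀ x : ℝ, 0 < x → x ≤ M → Real.cosh (x / 2) ≤ Real.exp (M / 2) := by
    intro x hx hxM
    have h1 : Real.exp (-(x / 2)) ≤ Real.exp (x / 2) := Real.exp_le_exp.2 (by linarith)
    have h2 : Real.exp (x / 2) ≤ Real.exp (M / 2) := Real.exp_le_exp.2 (by linarith)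
    rw [Real.cosh_eq]
    linarith
  have hsinh : ∀ x : ℝ, 0 < x → x ≤ M → Real.sinh (x / 2) ≤ x / 2 * Real.exp (M / 2) := by
    intro x hx hxM
    have h2 : Real.exp (x / 2) ≤ Real.exp (M / 2) := Real.exp_le_exp.2 (by linarith)
    have h3 : -x + 1 ≤ Real.exp (-x) := Real.add_one_le_exp _
    have h4 : Real.exp (-(x / 2)) = Real.exp (x / 2) * Real.exp (-x) := by
      rw [← Real.exp_add]; congr 1; ring
    have h5 : 0 < Real.exp (x / 2) := Real.exp_pos _
    rw [Real.sinh_eq, h4]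
    nlinarith
  generalize Real.exp (M / 2) = K at hK1 hcosh hsinh
  have hlK : 0 ≤ Real.log K := Real.log_nonneg hK1
  have hl8 : 0 < Real.log 8 := Real.log_pos (by norm_num)
  refine ⟨2 * (Real.log 8 + 2 * Real.log K), by linarith, ?_⟩
  intro l₁ l₂ l₃ d d' h1 h1M h2 h2M h3 h3M hd hd' hcd hcd'
  have ha := hcosh l₁ h1 h1M
  have hb := hcosh l₂ h2 h2M
  have hc := hcosh l₃ h3 h3M
  have hs1 := hsinh l₁ h1 h1M
  have hs1' : l₁ / 2 < Real.sinh (l₁ / 2) := Real.self_lt_sinh_iff.2 (by linarith)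
  have hs2 : 0 < Real.sinh (l₂ / 2) := Real.sinh_pos_iff.2 (by linarith)
  have ha1 := Real.one_le_cosh (l₁ / 2)
  have hb1 := Real.one_le_cosh (l₂ / 2)
  have hc1 := Real.one_le_cosh (l₃ / 2)
  have hsa := Real.cosh_sq (l₁ / 2)
  have hsb := Real.cosh_sq (l₂ / 2)
  have hsd := Real.cosh_sq d
  have hXpos := Real.cosh_pos (d' / 2)
  have hXu : Real.cosh (d' / 2) ≤ Real.exp (d' / 2) := by
    have : Real.exp (-(d' / 2)) ≤ Real.exp (d' / 2) := Real.exp_le_exp.2 (by linarith)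
    rw [Real.cosh_eq]; linarith
  have hXl : Real.exp (d' / 2) ≤ 2 * Real.cosh (d' / 2) := by
    have := Real.exp_pos (-(d' / 2))
    rw [Real.cosh_eq]; linarith
  have hs1p : 0 < Real.sinh (l₁ / 2) := by linarith
  rw [eq_div_iff (by positivity)] at hcd
  generalize Real.cosh (l₁ / 2) = a at *
  generalize Real.cosh (l₂ / 2) = b at *
  generalize Real.cosh (l₃ / 2) = c at *
  generalize Real.sinh (l₁ / 2) = s at *
  generalize Real.sinh (l₂ / 2) = t at *
  generalize Real.cosh (d' / 2) = X at *
  have hkey : (s * X) ^ 2 = (c + a * b) ^ 2 - s ^ 2 * t ^ 2 := by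
    rw [← hcd, hcd']; linear_combination (-(s ^ 2 * t ^ 2)) * hsd
  have hab : 1 ≤ a * b := one_le_mul_of_one_le_of_one_le ha1 hb1
  have hsX : 0 < s * X := by positivity
  have hup : s * X ≤ 2 * K ^ 2 := by
    have e1 : s * X ≤ c + a * b := by
      refine le_of_abs_le (abs_le_of_sq_le_sq ?_ (by linarith))
      rw [hkey]; nlinarith [sq_nonneg (s * t)]
    have e2 : a * b ≤ K * K := mul_le_mul ha hb (by linarith) (by linarith)
    nlinarith
  have hlo : 2 ≤ s * X := by
    refine le_of_abs_le (abs_le_of_sq_le_sq ?_ hsX.le)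
    have e3 : s ^ 2 * t ^ 2 = (a ^ 2 - 1) * (b ^ 2 - 1) := by rw [hsa, hsb]; ring
    have e4 : 1 ≤ c * (a * b) := one_le_mul_of_one_le_of_one_le hc1 hab
    have e5 : 1 ≤ a ^ 2 := one_le_pow₀ ha1
    have e6 : 1 ≤ b ^ 2 := one_le_pow₀ hb1
    have e7 : 1 ≤ c ^ 2 := one_le_pow₀ hc1
    rw [hkey, e3]
    linarith
  have hU : l₁ * Real.exp (d' / 2) ≤ 8 * K ^ 2 := by
    have : l₁ * X ≤ 2 * s * X := by gcongr; linarith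
    have e8 := mul_le_mul_of_nonneg_left hXl h1.le
    linarith
  have hL : 1 ≤ K * (l₁ * Real.exp (d' / 2)) := by
    have e5 : s * X ≤ (l₁ / 2 * K) * X := by gcongr
    have e6 : (l₁ / 2 * K) * X ≤ (l₁ / 2 * K) * Real.exp (d' / 2) := by gcongr
    linarith
  have hep := Real.exp_pos (d' / 2)
  have hKp : 0 < K := by linarith
  have hU' := Real.log_le_log (by positivity) hU
  have hL' := Real.log_nonneg hL
  rw [Real.log_mul hKp.ne' (by positivity)] at hL'
  rw [Real.log_mul (x := 8) (by norm_num) (by positivity), Real.log_pow] at hU'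
  rw [Real.log_mul h1.ne' hep.ne', Real.log_exp] at hU' hL'
  push_cast at hU'
  rw [one_div, Real.log_inv, abs_le]
  constructor <;> linarith
end

section
/- For every θ₀ with 0 < θ₀ ≤ π there exists a constant K > 0 such that: for all real numbers a, b ≥ 0, every θ with θ₀ ≤ θ ≤ π, and every real number c ≥ 0 satisfying cosh c = cosh a · cosh b − sinh a · sinh b · cos θ, one has c > a + b − K. -/
open Real

/-- Thin-triangle estimate: in a hyperbolic triangle with side lengths `a, b, c`
and angle `θ ≥ θ₀ > 0` opposite `c` (hyperbolic law of cosines), one has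
`c > a + b − K(θ₀)`. -/
theorem hyperbolic_triangle_thin (θ₀ : ℝ) (hθ₀ : 0 < θ₀) (hθ₀' : θ₀ ≤ Real.pi) :
    ∃ K : ℝ, 0 < K ∧ ∀ a b θ c : ℝ,
      0 ≤ a → 0 ≤ b → θ₀ ≤ θ → θ ≤ Real.pi → 0 ≤ c →
      Real.cosh c = Real.cosh a * Real.cosh b -
        Real.sinh a * Real.sinh b * Real.cos θ →
      c > a + b - K := by
  have hcos : Real.cos θ₀ < 1 := by
    have := Real.cos_lt_cos_of_nonneg_of_le_pi le_rfl hθ₀' hθ₀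
    simpa using this
  have hcos' := Real.neg_one_le_cos θ₀
  have hs : 0 < (1 - Real.cos θ₀) / 4 := by linarith
  have hlog : Real.log ((1 - Real.cos θ₀) / 4) ≤ 0 :=
    Real.log_nonpos hs.le (by linarith)
  refine ⟨1 - Real.log ((1 - Real.cos θ₀) / 4), by linarith, ?_⟩
  intro a b θ c ha hb h1 h2 hc h
  have hct : Real.cos θ ≤ Real.cos θ₀ := Real.cos_le_cos_of_nonneg_of_le_pi hθ₀.le h2 h1
  have hm1 := Real.neg_one_le_cos θ
  have key : Real.cosh c = Real.cosh (a + b) * ((1 - Real.cos θ) / 2)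
      + Real.cosh (a - b) * ((1 + Real.cos θ) / 2) := by
    rw [h, Real.cosh_add, Real.cosh_sub]; ring
  have hp1 : 0 ≤ Real.cosh (a - b) * ((1 + Real.cos θ) / 2) :=
    mul_nonneg (Real.cosh_pos _).le (by linarith)
  have hp2 : Real.cosh (a + b) * ((1 - Real.cos θ₀) / 2)
      ≤ Real.cosh (a + b) * ((1 - Real.cos θ) / 2) :=
    mul_le_mul_of_nonneg_left (by linarith) (Real.cosh_pos _).le
  have hp3 : Real.exp (a + b) / 2 * ((1 - Real.cos θ₀) / 2)
      ≤ Real.cosh (a + b) * ((1 - Real.cos θ₀) / 2) := by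
    apply mul_le_mul_of_nonneg_right _ (by linarith)
    rw [Real.cosh_eq]
    linarith [Real.exp_pos (-(a + b))]
  have hp4 : Real.cosh c ≤ Real.exp c := by
    rw [Real.cosh_eq]
    have : Real.exp (-c) ≤ Real.exp c := Real.exp_le_exp.2 (by linarith)
    linarith
  have hfin : Real.exp (a + b + Real.log ((1 - Real.cos θ₀) / 4)) ≤ Real.exp c := by
    rw [Real.exp_add (a + b), Real.exp_log hs]
    linarith
  have := Real.exp_le_exp.1 hfin
  linarith
end

section
/- For every M > 0 there exists a constant C > 0 with the following property: for all real numbers l with 0 < l ≤ M, every ω ≥ 0, and every real number d ≥ 0 satisfying cosh d = (cosh(ω/2) + cosh(l/2)²) / sinh(l/2)², one has |d − 2·log(1/l) − ω/2| ≤ C. -/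
open Real

/-- For a hyperbolic pair of pants with boundary lengths `l, l, ω` and `l ≤ M`,
the distance `d` between the two boundary components of length `l` satisfies
`d = 2·log(1/l) + ω/2 + O(1)`, uniformly. -/
theorem dual_curve_length_estimate_once (M : ℝ) (hM : 0 < M) :
    ∃ C : ℝ, 0 < C ∧ ∀ l ω d : ℝ,
      0 < l → l ≤ M → 0 ≤ ω → 0 ≤ d →
      Real.cosh d = (Real.cosh (ω / 2) + Real.cosh (l / 2) ^ 2) /
        Real.sinh (l / 2) ^ 2 →
      |d - 2 * Real.log (1 / l) - ω / 2| ≤ C := by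
  have h16 : 0 < Real.log 16 := Real.log_pos (by norm_num)
  refine ⟨M + Real.log 16, by positivity, ?_⟩
  intro l ω d hl hlM hω hd h
  have hS1 : l / 2 ≤ Real.sinh (l / 2) := Real.self_le_sinh_iff.2 (by positivity)
  have hKl : Real.exp (l / 2) ≤ Real.exp (M / 2) := Real.exp_le_exp.2 (by linarith)
  have hS2 : Real.sinh (l / 2) ≤ l / 2 * Real.exp (M / 2) := by
    have h1 : Real.sinh (l / 2) ≤ l / 2 * Real.exp (l / 2) := by
      have h2 := Real.add_one_le_exp (-l)
      have h3 : Real.exp (-(l / 2)) = Real.exp (l / 2) * Real.exp (-l) := by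
        rw [← Real.exp_add]; congr 1; ring
      rw [Real.sinh_eq, h3]
      nlinarith [Real.exp_pos (l / 2)]
    exact h1.trans (by gcongr)
  have hS0 : 0 < Real.sinh (l / 2) := by linarith
  have hle : ∀ x : ℝ, 0 ≤ x → Real.cosh x ≤ Real.exp x := by
    intro x hx
    rw [Real.cosh_eq]
    have : Real.exp (-x) ≤ Real.exp x := Real.exp_le_exp.2 (by linarith)
    linarith
  have hge : ∀ x : ℝ, Real.exp x / 2 ≤ Real.cosh x := by
    intro x
    rw [Real.cosh_eq]
    linarith [Real.exp_pos (-x)]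
  have hc : Real.cosh (l / 2) ≤ Real.exp (M / 2) := (hle _ (by positivity)).trans hKl
  have hc0 : 0 < Real.cosh (l / 2) := Real.cosh_pos _
  have hKK : Real.exp (M / 2) ^ 2 = Real.exp M := by
    rw [← Real.exp_nat_mul]; congr 1; push_cast; ring
  have hc2 : Real.cosh (l / 2) ^ 2 ≤ Real.exp M := by
    rw [← hKK]; gcongr
  have hS3 : Real.sinh (l / 2) ^ 2 ≤ l ^ 2 / 4 * Real.exp M := by
    calc _ ≤ (l / 2 * Real.exp (M / 2)) ^ 2 := by gcongr
      _ = _ := by rw [mul_pow, hKK]; ring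
  have hS4 : l ^ 2 / 4 ≤ Real.sinh (l / 2) ^ 2 := by nlinarith
  have hE1 : 1 ≤ Real.exp (ω / 2) := Real.one_le_exp (by positivity)
  have hM1 : 1 ≤ Real.exp M := Real.one_le_exp hM.le
  rw [eq_div_iff (by positivity)] at h
  have hll : Real.exp (2 * Real.log l) = l ^ 2 := by
    rw [two_mul, Real.exp_add, Real.exp_log hl]; ring
  have hup : Real.exp d * l ^ 2 ≤ Real.exp M * 16 * Real.exp (ω / 2) := by
    have h1 : Real.exp d / 2 * (l ^ 2 / 4) ≤ Real.cosh d * Real.sinh (l / 2) ^ 2 := by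
      gcongr
      exact hge d
    have h2 := hle (ω / 2) (by positivity)
    nlinarith
  have hlo : Real.exp (ω / 2) ≤ Real.exp M * (Real.exp d * l ^ 2) := by
    have h1 : Real.cosh d * Real.sinh (l / 2) ^ 2 ≤ Real.exp d * (l ^ 2 / 4 * Real.exp M) := by
      gcongr
      exact hle d hd
    have h2 := hge (ω / 2)
    have : 0 < Real.exp M * (Real.exp d * l ^ 2) := by positivity
    nlinarith
  have e1 : d + 2 * Real.log l ≤ M + Real.log 16 + ω / 2 := by
    rw [← Real.exp_le_exp, Real.exp_add, Real.exp_add, Real.exp_add, hll,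
      Real.exp_log (by norm_num)]
    exact hup
  have e2 : ω / 2 ≤ M + (d + 2 * Real.log l) := by
    rw [← Real.exp_le_exp, Real.exp_add, Real.exp_add, hll]
    exact hlo
  rw [one_div, Real.log_inv, abs_le]
  constructor <;> linarith
end

section
/- Let (lₙ), (ω₁ₙ), (ω₂ₙ) be sequences of positive real numbers with lₙ → 0, and let (dₙ), (bₙ) be sequences of nonnegative real numbers such that for every n, cosh dₙ = (cosh(ω₂ₙ/2) + cosh(lₙ/2)·cosh(ω₁ₙ/2)) / (sinh(lₙ/2)·sinh(ω₁ₙ/2)) and cosh(bₙ/2) = sinh(dₙ)·sinh(ω₁ₙ/2). Then the sequence bₙ − 2·log(1/lₙ) − max(ω₁ₙ, ω₂ₙ) is bounded. -/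
open Filter Real

lemma cosh_le_exp_aux {x y : ℝ} (hx : 0 ≤ x) (hxy : x ≤ y) : Real.cosh x ≤ Real.exp y := by
  rw [Real.cosh_eq]
  have h1 : Real.exp (-x) ≤ Real.exp y := Real.exp_le_exp.2 (by linarith)
  have h2 : Real.exp x ≤ Real.exp y := Real.exp_le_exp.2 hxy
  linarith

lemma exp_le_cosh_aux (x : ℝ) : Real.exp x ≤ 2 * Real.cosh x := by
  rw [Real.cosh_eq]
  have := Real.exp_pos (-x)
  linarith

lemma sinh_le_aux {x : ℝ} : Real.sinh x ≤ x * Real.exp x := by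
  rw [Real.sinh_eq]
  have h1 := Real.add_one_le_exp (-(2 * x))
  have h2 : Real.exp (-x) = Real.exp x * Real.exp (-(2 * x)) := by
    rw [← Real.exp_add]; congr 1; ring
  rw [h2]
  have h3 := Real.exp_pos x
  nlinarith

lemma core_aux {L A B d b K : ℝ} (hL : 0 < L) (hA : 0 < A) (hB : 0 < B) (hb : 0 ≤ b)
    (hLK : L ≤ K)
    (hhex : Real.cosh d = (Real.cosh B + Real.cosh L * Real.cosh A) /
      (Real.sinh L * Real.sinh A))
    (hpent : Real.cosh b = Real.sinh d * Real.sinh A) :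
    |b + Real.log (2 * L) - max A B| ≤ K + Real.log 12 := by
  have hsL : 0 < Real.sinh L := Real.sinh_pos_iff.2 hL
  have hsA : 0 < Real.sinh A := Real.sinh_pos_iff.2 hA
  set M := max A B with hM
  have hAM : A ≤ M := le_max_left _ _
  have hBM : B ≤ M := le_max_right _ _
  have key : (Real.cosh b * Real.sinh L) ^ 2 =
      Real.cosh B ^ 2 + Real.cosh A ^ 2 + 2 * Real.cosh A * Real.cosh B * Real.cosh L
        + (Real.cosh L ^ 2 - 1) := by
    have h1 : Real.cosh d * (Real.sinh L * Real.sinh A)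
        = Real.cosh B + Real.cosh L * Real.cosh A := by
      rw [hhex]; field_simp
    have hd := Real.cosh_sq d
    have hA2 := Real.cosh_sq A
    have hL2 := Real.cosh_sq L
    have h2 : (Real.cosh b * Real.sinh L) ^ 2 =
        (Real.cosh d * (Real.sinh L * Real.sinh A)) ^ 2 - (Real.sinh L * Real.sinh A) ^ 2 := by
      rw [hpent, mul_pow (Real.cosh d), hd]; ring
    rw [h2, h1, mul_pow, Real.sinh_sq, Real.sinh_sq]; ring
  have cA := Real.one_le_cosh A
  have cB := Real.one_le_cosh B
  have cL := Real.one_le_cosh L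
  have cb := Real.one_le_cosh b
  have eA := cosh_le_exp_aux hA.le hAM
  have eB := cosh_le_exp_aux hB.le hBM
  have eL := cosh_le_exp_aux hL.le hLK
  have pM := Real.exp_pos M
  have pK := Real.exp_pos K
  have pb := Real.exp_pos b
  have low : Real.exp M ≤ 2 * (Real.cosh b * Real.sinh L) := by
    have hMM : Real.cosh M ^ 2 ≤ (Real.cosh b * Real.sinh L) ^ 2 := by
      have hp : 0 ≤ 2 * Real.cosh A * Real.cosh B * Real.cosh L := by positivity
      rw [key]
      rcases max_cases A B with ⟨h, _⟩ | ⟨h, _⟩ <;> rw [hM, h] <;> nlinarith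
    have := (sq_le_sq₀ (by positivity) (by positivity)).1 hMM
    linarith [exp_le_cosh_aux M]
  have up : Real.cosh b * Real.sinh L ≤ 3 * (Real.exp M * Real.exp K) := by
    refine (sq_le_sq₀ (by positivity) (by positivity)).1 ?_
    rw [key]
    have oM : 1 ≤ Real.exp M := by linarith
    have oK : 1 ≤ Real.exp K := by linarith
    have q : Real.exp M ≤ Real.exp M * Real.exp K := by nlinarith
    have q' : Real.exp K ≤ Real.exp M * Real.exp K := by nlinarith
    have a1 : Real.cosh B ^ 2 ≤ (Real.exp M * Real.exp K) ^ 2 :=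
      pow_le_pow_left₀ (by positivity) (eB.trans q) 2
    have a2 : Real.cosh A ^ 2 ≤ (Real.exp M * Real.exp K) ^ 2 :=
      pow_le_pow_left₀ (by positivity) (eA.trans q) 2
    have a3 : Real.cosh L ^ 2 ≤ (Real.exp M * Real.exp K) ^ 2 :=
      pow_le_pow_left₀ (by positivity) (eL.trans q') 2
    have a4 : Real.cosh A * (Real.cosh B * Real.cosh L) ≤ 
        (Real.exp M * Real.exp K) * (Real.exp M * Real.exp K) := by
      have : Real.cosh B * Real.cosh L ≤ Real.exp M * Real.exp K := by gcongr
      have := eA.trans q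
      gcongr
    nlinarith
  have sup : Real.sinh L ≤ L * Real.exp K := 
    sinh_le_aux.trans (by gcongr)
  have slow : L ≤ Real.sinh L := Real.self_le_sinh_iff.2 hL.le
  have low2 : Real.exp M ≤ Real.exp b * (2 * L) * Real.exp K := by
    have : Real.cosh b * Real.sinh L ≤ Real.exp b * (L * Real.exp K) := by
      have := cosh_le_exp_aux hb le_rfl
      gcongr
    linarith
  have up2 : Real.exp b * (2 * L) ≤ 12 * (Real.exp M * Real.exp K) := by
    have : Real.exp b * L ≤ 2 * Real.cosh b * Real.sinh L := by
      have := exp_le_cosh_aux b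
      gcongr
    linarith
  have l1 := Real.log_le_log pM low2
  have l2 := Real.log_le_log (by positivity) up2
  rw [Real.log_mul (by positivity) (by positivity), Real.log_mul (by positivity) (by positivity),
    Real.log_exp, Real.log_exp, Real.log_exp] at l1
  rw [Real.log_mul pb.ne' (by positivity), Real.log_mul (x := 12) (by norm_num) (by positivity),
    Real.log_exp, ← Real.exp_add, Real.log_exp] at l2
  have h12 : 0 ≤ Real.log 12 := Real.log_nonneg (by norm_num)
  rw [abs_le]
  constructor <;> linarith

/-- If `lₙ → 0` and `dₙ, bₙ ≥ 0` satisfy the hexagon and pentagon formulae for a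
pair of pants with boundary lengths `lₙ, ω₁ₙ, ω₂ₙ`, then
`bₙ = 2·log(1/lₙ) + max(ω₁ₙ, ω₂ₙ) + O(1)`. -/
theorem self_perpendicular_asymptotics
    (l ω₁ ω₂ : ℕ → ℝ) (hl : ∀ n, 0 < l n) (hω₁ : ∀ n, 0 < ω₁ n) (hω₂ : ∀ n, 0 < ω₂ n)
    (hl0 : Tendsto l atTop (nhds 0))
    (d b : ℕ → ℝ) (hd : ∀ n, 0 ≤ d n) (hb : ∀ n, 0 ≤ b n)
    (hhex : ∀ n, Real.cosh (d n) =
      (Real.cosh (ω₂ n / 2) + Real.cosh (l n / 2) * Real.cosh (ω₁ n / 2)) /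
        (Real.sinh (l n / 2) * Real.sinh (ω₁ n / 2)))
    (hpent : ∀ n, Real.cosh (b n / 2) = Real.sinh (d n) * Real.sinh (ω₁ n / 2)) :
    ∃ C : ℝ, ∀ n, |b n - 2 * Real.log (1 / l n) - max (ω₁ n) (ω₂ n)| ≤ C := by
  obtain ⟨K, hK⟩ := hl0.bddAbove_range
  refine ⟨2 * (K / 2 + Real.log 12), fun n => ?_⟩
  have hn : l n ≤ K := hK ⟨n, rfl⟩
  have h := core_aux (L := l n / 2) (A := ω₁ n / 2) (B := ω₂ n / 2) (b := b n / 2) (K := K / 2)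
    (by linarith [hl n]) (by linarith [hω₁ n]) (by linarith [hω₂ n]) (by linarith [hb n])
    (by linarith) (hhex n) (hpent n)
  rw [max_div_div_right (by norm_num), show 2 * (l n / 2) = l n by ring] at h
  rw [one_div, Real.log_inv]
  rw [abs_le] at h ⊢
  constructor <;> linarith [h.1, h.2]
end

section
/- Let N ≥ 1, let a₁, …, a_N > 0 and C₁, …, C_N > 0 be real constants, let (sₙ) be a sequence of positive reals with sₙ → 0, and for each i let (u_i(n)) be a sequence of positive reals. Suppose that for some index i₀ the sequence u_{i₀}(n)/sₙ tends either to 0 or to +∞ as n → ∞. Then Σᵢ ( aᵢ·u_i(n)/sₙ + Cᵢ·log(sₙ/u_i(n)) ) → +∞ as n → ∞. -/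
open Filter Real

theorem aux_lower (a C x : ℝ) (ha : 0 < a) (hC : 0 < C) (hx : 0 < x) :
    a / 2 * x + (C + C * Real.log (a / (2 * C))) ≤ a * x + C * (-Real.log x) := by
  have hb : 0 < a / (2 * C) := by positivity
  have h1 := Real.log_le_sub_one_of_pos (mul_pos hb hx)
  rw [Real.log_mul hb.ne' hx.ne'] at h1
  have h2 := mul_le_mul_of_nonneg_left h1 hC.le
  have h3 : C * (a / (2 * C) * x - 1) = a / 2 * x - C := by
    field_simp
  rw [h3] at h2
  linarith

/-- If some `u_{i₀}(n)/sₙ` tends to `0` or `+∞`, then the sum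
`Σᵢ (aᵢ·uᵢ(n)/sₙ + Cᵢ·log(sₙ/uᵢ(n)))` tends to `+∞`. -/
theorem sum_ratio_log_tendsto_atTop (N : ℕ) (hN : 1 ≤ N)
    (a C : Fin N → ℝ) (ha : ∀ i, 0 < a i) (hC : ∀ i, 0 < C i)
    (s : ℕ → ℝ) (hs : ∀ n, 0 < s n) (hs0 : Tendsto s atTop (nhds 0))
    (u : Fin N → ℕ → ℝ) (hu : ∀ i n, 0 < u i n) (i₀ : Fin N)
    (h : Tendsto (fun n => u i₀ n / s n) atTop (nhds 0) ∨
      Tendsto (fun n => u i₀ n / s n) atTop atTop) :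
    Tendsto (fun n => ∑ i, (a i * (u i n / s n) + C i * Real.log (s n / u i n)))
      atTop atTop := by
  have hx : ∀ i n, 0 < u i n / s n := fun i n => div_pos (hu i n) (hs n)
  have hlog : ∀ i n, Real.log (s n / u i n) = -Real.log (u i n / s n) := by
    intro i n
    rw [← Real.log_inv, inv_div]
  simp only [hlog]
  have hmain : Tendsto (fun n => a i₀ * (u i₀ n / s n) + C i₀ * (-Real.log (u i₀ n / s n)))
      atTop atTop := by
    rcases h with h | h
    · have h1 : Tendsto (fun n => u i₀ n / s n) atTop (nhdsWithin 0 (Set.Ioi 0)) :=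
        tendsto_nhdsWithin_iff.2 ⟨h, Eventually.of_forall (hx i₀)⟩
      have h2 := tendsto_neg_atBot_atTop.comp (Real.tendsto_log_nhdsGT_zero.comp h1)
      refine tendsto_atTop_mono (fun n => ?_) (h2.const_mul_atTop (hC i₀))
      have := mul_pos (ha i₀) (hx i₀ n)
      simp only [Function.comp]
      linarith
    · exact tendsto_atTop_mono (fun n => aux_lower _ _ _ (ha i₀) (hC i₀) (hx i₀ n))
        (tendsto_atTop_add_const_right _ _ (h.const_mul_atTop (half_pos (ha i₀))))
  refine tendsto_atTop_mono (fun n => ?_) (tendsto_atTop_add_const_right _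
    (∑ i ∈ Finset.univ.erase i₀, (C i + C i * Real.log (a i / (2 * C i)))) hmain)
  rw [← Finset.add_sum_erase _ _ (Finset.mem_univ i₀)]
  refine add_le_add le_rfl (Finset.sum_le_sum fun i hi => ?_)
  have := aux_lower _ _ _ (ha i) (hC i) (hx i n)
  have := mul_pos (half_pos (ha i)) (hx i n)
  linarith
end
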